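/- If G is algorithmically stackable over A, with normal form set C and extended stacking map Φ for which S_Φ is computable, then membership in C is decidable: the predicate (fun w : List A => w ∈ C) is a computable predicate (ComputablePred). -/

import Mathlib

namespace Stk

variable {G : Type*} [Group G] {A : Type*}

/-- Evaluation of a word over the generating alphabet in the group. -/
def eval (ρ : A → G) (w : List A) : G := (w.map ρ).prod

/-- `C` is a set of normal forms: evaluation restricted to `C` is a bijection onto `G`. -/
def IsNormalFormSet (ρ : A → G) (C : Set (List A)) : Prop :=
  ∀ g : G, ∃! w : List A, w ∈ C ∧ eval ρ w = g

/-- The directed edge `(g, a)` of the Cayley graph is degenerate with respect to `C`. -/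
def IsDegenerate (ρ : A → G) (ι : A → A) (C : Set (List A)) (e : G × A) : Prop :=
  ∃ y₁ y₂ : List A, y₁ ∈ C ∧ eval ρ y₁ = e.1 ∧ y₂ ∈ C ∧ eval ρ y₂ = e.1 * ρ e.2 ∧
    (y₁ ++ [e.2] = y₂ ∨ y₁ = y₂ ++ [ι e.2])

/-- A non-degenerate edge is recursive. -/
def IsRecursive (ρ : A → G) (ι : A → A) (C : Set (List A)) (e : G × A) : Prop :=
  ¬ IsDegenerate ρ ι C e

/-- `e` is one of the edges along the path starting at `g` labeled by the word `w`. -/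
def EdgeOnPath (ρ : A → G) (g : G) (w : List A) (e : G × A) : Prop :=
  ∃ i : Fin w.length, e = (g * eval ρ (w.take i), w.get i)

/-- A stackable structure for `(G, A)`: a normal form set `C` containing the empty word,
a well-founded strict partial order `lt` on the recursive edges, and a constant `k`,
such that each edge `(g, a)` admits a word of length at most `k` evaluating to `ρ a`,
each of whose edges along the path from `g` is degenerate or recursive and `lt`-below
`(g, a)`. -/
def IsStackableStructure (ρ : A → G) (ι : A → A) (C : Set (List A))
    (lt : G × A → G × A → Prop) (k : ℕ) : Prop :=
  ([] : List A) ∈ C ∧ IsNormalFormSet ρ C ∧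
  (∀ e e' : G × A, lt e e' → IsRecursive ρ ι C e ∧ IsRecursive ρ ι C e') ∧
  Transitive lt ∧ WellFounded lt ∧
  ∀ g : G, ∀ a : A, ∃ w : List A, w.length ≤ k ∧ eval ρ w = ρ a ∧
    ∀ e' : G × A, EdgeOnPath ρ g w e' → IsDegenerate ρ ι C e' ∨ lt e' (g, a)

/-- The pair `(G, A)` is stackable. -/
def IsStackable (ρ : A → G) (ι : A → A) : Prop :=
  ∃ (C : Set (List A)) (lt : G × A → G × A → Prop) (k : ℕ),
    IsStackableStructure ρ ι C lt k

/-- A stacking map for a stackable structure. -/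
def IsStackingMap (ρ : A → G) (ι : A → A) (C : Set (List A))
    (lt : G × A → G × A → Prop) (k : ℕ) (Φ : G × A → List A) : Prop :=
  ∀ e : G × A, IsRecursive ρ ι C e →
    eval ρ (Φ e) = ρ e.2 ∧ (Φ e).length ≤ k ∧
    ∀ e' : G × A, EdgeOnPath ρ e.1 (Φ e) e' → IsDegenerate ρ ι C e' ∨ lt e' e

/-- A stacking map extended by `Φ (g, a) = [a]` on degenerate edges. -/
def IsExtendedStackingMap (ρ : A → G) (ι : A → A) (C : Set (List A))
    (lt : G × A → G × A → Prop) (k : ℕ) (Φ : G × A → List A) : Prop :=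
  (∀ e : G × A, IsDegenerate ρ ι C e → Φ e = [e.2]) ∧ IsStackingMap ρ ι C lt k Φ

/-- A word is freely reduced if no letter is followed by its formal inverse. -/
def FreelyReduced (ι : A → A) (w : List A) : Prop :=
  List.Chain' (fun a b => b ≠ ι a) w


/-- The canonical `Primcodable` encoding of a finite type with decidable equality. -/
noncomputable instance (priority := 100) primcodableOfFintype {B : Type*} [Fintype B] [DecidableEq B] :
    Primcodable B :=
  Primcodable.ofEquiv (Fin (Fintype.card B)) (Fintype.equivFin B)

/-!
In a stackable structure every edge can be replaced by a path of degenerate or smaller edges, so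
well-founded induction shows that a property of group elements which holds at `1` and is carried
along degenerate edges holds everywhere. Applied to the property that every prefix of the normal
form of `g` is a normal form, this makes `C` prefix-closed. Moreover `(g, a)` is degenerate exactly
when `Φ (g, a) = [a]`: for a recursive edge this equation would put the edge strictly below itself.
Thus `u ++ [a] ∈ C` if and only if `u ∈ C`, `Φ (eval ρ u, a) = [a]` and `u` does not end in `ι a`,
and membership in `C` is decided by reading a word letter by letter.
-/

section Computability

variable {α : Type*} [Primcodable α]

theorem computablePred_and {p q : α → Prop} (hp : ComputablePred p) (hq : ComputablePred q) :
    ComputablePred fun x => p x ∧ q x := by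
  classical
  refine Computable.computablePred ?_
  exact (Primrec.and.to_comp.comp hp.decide hq.decide).of_eq fun _ => (Bool.decide_and _ _).symm

theorem computablePred_eq {β : Type*} [Primcodable β] {f g : α → β} (hf : Computable f)
    (hg : Computable g) : ComputablePred fun x => f x = g x :=
  ComputablePred.computable_of_manyOneReducible
    (.mk (fun y : β × β => y.1 = y.2) (hf.pair hg)) Primrec.eq.computablePred

theorem primrec_list_getLast? : Primrec (List.getLast? : List α → Option α) :=
  (Primrec.list_head?.comp Primrec.list_reverse).of_eq fun _ => List.head?_reverse

theorem computablePred_mem_of_append_singleton_mem_iff {L : Set (List α)}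
    {p : List α × α → Prop} (hp : ComputablePred p)
    (hL : ∀ u a, u ++ [a] ∈ L ↔ u ∈ L ∧ p (u, a)) : ComputablePred fun w => w ∈ L := by
  classical
  let letterTest (w : List α) (n : ℕ) : Bool :=
    Option.casesOn (motive := fun _ => Bool) w[n]? true fun a => decide (p (w.take n, a))
  have letterTest_computable : Computable₂ letterTest := by
    refine Computable.option_casesOn Primrec.list_getElem?.to_comp (Computable.const true) ?_
    refine hp.decide.comp (Computable.pair ?_ Computable.snd)
    exact Primrec.list_take.to_comp.comp (Computable.snd.comp Computable.fst)
      (Computable.fst.comp Computable.fst)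
  have take_succ_mem (w : List α) (n : ℕ) :
      w.take (n + 1) ∈ L ↔ w.take n ∈ L ∧ letterTest w n = true := by
    rw [List.take_add_one]
    cases hn : w[n]? <;> simp [letterTest, hn, hL]
  let scan (w : List α) (n : ℕ) : Bool :=
    Nat.rec (decide ([] ∈ L)) (fun m b => b && letterTest w m) n
  have scan_eq (w : List α) (n : ℕ) : scan w n = decide (w.take n ∈ L) := by
    induction n with
    | zero => rfl
    | succ n ih => simp only [take_succ_mem, Bool.decide_and, ← ih, Bool.decide_eq_true, scan]
  have scan_computable : Computable fun w => scan w w.length :=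
    Computable.nat_rec (h := fun w (x : ℕ × Bool) => x.2 && letterTest w x.1)
      Computable.list_length (Computable.const _) <|
      Primrec.and.to_comp.comp (Computable.snd.comp Computable.snd) <|
        letterTest_computable.comp Computable.fst (Computable.fst.comp Computable.snd)
  refine Computable.computablePred ?_
  exact scan_computable.of_eq fun w => by rw [scan_eq, List.take_length]

end Computability

section Words

variable {ρ : A → G}

theorem eval_nil (ρ : A → G) : eval ρ [] = 1 := rfl

theorem eval_cons (ρ : A → G) (a : A) (w : List A) : eval ρ (a :: w) = ρ a * eval ρ w :=
  List.prod_cons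

theorem eval_append_singleton (ρ : A → G) (u : List A) (a : A) :
    eval ρ (u ++ [a]) = eval ρ u * ρ a := by
  simp only [eval, List.map_append, List.map_singleton, List.prod_append, List.prod_singleton]

theorem edgeOnPath_cons {g : G} {a : A} {w : List A} {e : G × A} :
    EdgeOnPath ρ g (a :: w) e ↔ e = (g, a) ∨ EdgeOnPath ρ (g * ρ a) w e := by
  simp [EdgeOnPath, Fin.exists_fin_succ, eval, mul_assoc]

theorem mul_eval_of_forall_edgeOnPath {P : G → Prop} {w : List A} {g : G}
    (hw : ∀ e, EdgeOnPath ρ g w e → P e.1 → P (e.1 * ρ e.2)) (hg : P g) :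
    P (g * eval ρ w) := by
  induction w generalizing g with
  | nil => rwa [eval_nil, mul_one]
  | cons a w ih =>
    rw [eval_cons, ← mul_assoc]
    exact ih (fun e he => hw e (edgeOnPath_cons.2 (.inr he)))
      (hw (g, a) (edgeOnPath_cons.2 (.inl rfl)) hg)

theorem IsNormalFormSet.eq_of_eval_eq {C : Set (List A)} (hC : IsNormalFormSet ρ C)
    {u v : List A} (hu : u ∈ C) (hv : v ∈ C) (huv : eval ρ u = eval ρ v) : u = v :=
  (hC (eval ρ v)).unique ⟨hu, huv⟩ ⟨hv, rfl⟩

end Words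

section Stackable

variable {ρ : A → G} {ι : A → A} {C : Set (List A)} {lt : G × A → G × A → Prop} {k : ℕ}

theorem IsStackableStructure.induction_on_degenerate (h : IsStackableStructure ρ ι C lt k)
    {P : G → Prop} (one : P 1)
    (step : ∀ e, IsDegenerate ρ ι C e → P e.1 → P (e.1 * ρ e.2)) (g : G) : P g := by
  obtain ⟨-, hC, -, -, hwf, hpath⟩ := h
  have all_edges (e : G × A) : P e.1 → P (e.1 * ρ e.2) := by
    induction e using hwf.induction with
    | _ e ih =>
      obtain ⟨w, -, hw, hedges⟩ := hpath e.1 e.2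
      rw [← hw]
      exact mul_eval_of_forall_edgeOnPath fun e' he' => (hedges e' he').elim (step e') (ih e')
  obtain ⟨y, ⟨-, rfl⟩, -⟩ := hC g
  rw [← one_mul (eval ρ y)]
  exact mul_eval_of_forall_edgeOnPath (fun e _ => all_edges e) one

theorem IsStackableStructure.mem_of_prefix (h : IsStackableStructure ρ ι C lt k)
    {v w : List A} (hvw : v <+: w) (hw : w ∈ C) : v ∈ C := by
  have hC : IsNormalFormSet ρ C := h.2.1
  suffices ∀ g, ∀ y ∈ C, eval ρ y = g → ∀ x, x <+: y → x ∈ C from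
    this (eval ρ w) w hw rfl v hvw
  refine h.induction_on_degenerate ?_ ?_
  · intro y hy hy1 x hx
    obtain rfl : y = [] := hC.eq_of_eval_eq hy h.1 hy1
    rwa [List.prefix_nil.1 hx]
  · rintro ⟨g, a⟩ ⟨y₁, y₂, hy₁, hg, hy₂, hga, hdeg⟩ ih y hy hyga x hx
    obtain rfl : y = y₂ := hC.eq_of_eval_eq hy hy₂ (hyga.trans hga.symm)
    rcases hdeg with rfl | rfl
    · rcases List.prefix_concat_iff.1 hx with rfl | hx
      · exact hy
      · exact ih y₁ hy₁ hg x hx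
    · exact ih _ hy₁ hg x (hx.trans (List.prefix_append _ _))

theorem IsStackableStructure.getLast?_ne_of_append_singleton_mem
    (h : IsStackableStructure ρ ι C lt k) (hρι : ∀ a, ρ (ι a) = (ρ a)⁻¹) {u : List A} {a : A}
    (hua : u ++ [a] ∈ C) : u.getLast? ≠ some (ι a) := by
  intro hlast
  obtain ⟨v, rfl⟩ := List.getLast?_eq_some_iff.1 hlast
  have hv : v ∈ C := h.mem_of_prefix ⟨[ι a, a], by simp⟩ hua
  have eval_eq : eval ρ (v ++ [ι a] ++ [a]) = eval ρ v := by
    rw [eval_append_singleton, eval_append_singleton, hρι, inv_mul_cancel_right]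
  simpa using h.2.1.eq_of_eval_eq hua hv eval_eq

theorem IsStackableStructure.append_singleton_mem_iff (h : IsStackableStructure ρ ι C lt k)
    (hρι : ∀ a, ρ (ι a) = (ρ a)⁻¹) (u : List A) (a : A) :
    u ++ [a] ∈ C ↔
      u ∈ C ∧ IsDegenerate ρ ι C (eval ρ u, a) ∧ u.getLast? ≠ some (ι a) := by
  constructor
  · intro hua
    have hu : u ∈ C := h.mem_of_prefix (List.prefix_append u [a]) hua
    exact ⟨hu, ⟨u, u ++ [a], hu, rfl, hua, eval_append_singleton ρ u a, .inl rfl⟩,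
      h.getLast?_ne_of_append_singleton_mem hρι hua⟩
  · rintro ⟨hu, ⟨y₁, y₂, hy₁, hy₁u, hy₂, -, hdeg⟩, hlast⟩
    obtain rfl : y₁ = u := h.2.1.eq_of_eval_eq hy₁ hu hy₁u
    rcases hdeg with rfl | hu_eq
    · exact hy₂
    · exact absurd (hu_eq ▸ List.getLast?_concat) hlast

theorem IsExtendedStackingMap.isDegenerate_iff {Φ : G × A → List A}
    (hΦ : IsExtendedStackingMap ρ ι C lt k Φ) (hwf : WellFounded lt) (e : G × A) :
    IsDegenerate ρ ι C e ↔ [e.2] = Φ e := by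
  refine ⟨fun hdeg => (hΦ.1 e hdeg).symm, fun heq => ?_⟩
  by_contra hrec
  have e_on_path : EdgeOnPath ρ e.1 (Φ e) e := heq ▸ edgeOnPath_cons.2 (.inl rfl)
  exact ((hΦ.2 e hrec).2.2 e e_on_path).elim hrec (hwf.irrefl.irrefl e)

theorem IsStackableStructure.computablePred_mem [Primcodable A]
    (h : IsStackableStructure ρ ι C lt k) (hι : Computable ι) (hρι : ∀ a, ρ (ι a) = (ρ a)⁻¹)
    (hdeg : ComputablePred fun x : List A × A => IsDegenerate ρ ι C (eval ρ x.1, x.2)) :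
    ComputablePred fun w => w ∈ C := by
  have hlast : ComputablePred fun x : List A × A => x.1.getLast? ≠ some (ι x.2) :=
    (computablePred_eq (primrec_list_getLast?.to_comp.comp Computable.fst)
      (Computable.option_some.comp (hι.comp Computable.snd))).not
  exact computablePred_mem_of_append_singleton_mem_iff (computablePred_and hdeg hlast)
    (h.append_singleton_mem_iff hρι)

theorem mem_normalForms_computable_of_algorithmically_stackable_general [Primcodable A]
    (hι : Computable ι) (hρι : ∀ a, ρ (ι a) = (ρ a)⁻¹)
    (hstk : IsStackableStructure ρ ι C lt k)
    {Φ : G × A → List A} (hΦ : IsExtendedStackingMap ρ ι C lt k Φ)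
    (hS : ComputablePred fun x : List A × A × List A => x.2.2 = Φ (eval ρ x.1, x.2.1)) :
    ComputablePred fun w => w ∈ C := by
  have hwf : WellFounded lt := hstk.2.2.2.2.1
  have singleton_triple : Computable fun x : List A × A => (x.1, x.2, [x.2]) :=
    Computable.fst.pair
      (Computable.snd.pair (Computable.list_cons.comp Computable.snd (Computable.const [])))
  have hΦ_singleton : ComputablePred fun x : List A × A => [x.2] = Φ (eval ρ x.1, x.2) :=
    ComputablePred.computable_of_manyOneReducible
      (.mk (fun y : List A × A × List A => y.2.2 = Φ (eval ρ y.1, y.2.1)) singleton_triple) hS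
  exact hstk.computablePred_mem hι hρι
    (hΦ_singleton.of_eq fun x => (hΦ.isDegenerate_iff hwf (eval ρ x.1, x.2)).symm)

end Stackable

/-- for an algorithmically stackable group, membership in the normal form
set is decidable. -/
theorem mem_normalForms_computable_of_algorithmically_stackable {G : Type*} [Group G]
    {A : Type*} [Fintype A] [DecidableEq A]
    (ρ : A → G) (ι : A → A)
    (hgen : Subgroup.closure (Set.range ρ) = ⊤)
    (hne : ∀ a : A, ρ a ≠ 1)
    (hinv : Function.Involutive ι)
    (hρι : ∀ a : A, ρ (ι a) = (ρ a)⁻¹)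
    (C : Set (List A)) (lt : G × A → G × A → Prop) (k : ℕ)
    (hstk : IsStackableStructure ρ ι C lt k)
    (Φ : G × A → List A) (hΦ : IsExtendedStackingMap ρ ι C lt k Φ)
    (hS : ComputablePred (fun x : List A × A × List A => x.2.2 = Φ (eval ρ x.1, x.2.1))) :
    ComputablePred (fun w : List A => w ∈ C) :=
  mem_normalForms_computable_of_algorithmically_stackable_general
    (Primrec.dom_finite ι).to_comp hρι hstk hΦ hS

end Stk
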